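/- Let k > 0 and let r, s be real numbers with s > r > 0 (so s² − r² > 0), and let c ∈ (0,1) be the unique solution of (1 + c)/(2√c) = s/r. Set C = √(s² − r²). Then for every x ∈ ℕ and every n ∈ ℕ, the orthonormal Meixner polynomials M_n(x) = M_n(x; 2k, c) satisfy r√((n+1)(n+2k)) M_{n+1}(x) + 2s(n+k) M_n(x) + r√(n(n+2k−1)) M_{n−1}(x) = 2C(x+k) M_n(x), with the convention M_{−1}(x) = 0. That is, for each x ∈ ℕ the sequence (M_n(x; 2k, c))_{n∈ℕ} is a formal eigenvector of the Jacobi operator π_k(L) : e_n ↦ r√((n+1)(n+2k)) e_{n+1} + 2s(k+n) e_n + r√(n(n+2k−1)) e_{n−1} with eigenvalue 2C(x+k). -/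

import Mathlib

/-- Pochhammer symbol (q)_l = q(q+1)⋯(q+l−1). -/
noncomputable def poch (q : ℝ) (l : ℕ) : ℝ := ∏ i ∈ Finset.range l, (q + i)

/-- Orthonormal Meixner polynomials
M_n(x; β, c) = (−1)^n √((β)_n c^n / n!) Σ_l (−n)_l (−x)_l / ((β)_l l!) (1 − 1/c)^l. -/
noncomputable def meixner (n x : ℕ) (β c : ℝ) : ℝ :=
  (-1) ^ n * Real.sqrt (poch β n * c ^ n / n.factorial) *
    ∑ l ∈ Finset.range (min n x + 1),
      poch (-(n : ℝ)) l * poch (-(x : ℝ)) l / (poch β l * (l.factorial : ℝ))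
        * (1 - 1 / c) ^ l

lemma poch_zero (q : ℝ) : poch q 0 = 1 := by simp [poch]

lemma poch_succ (q : ℝ) (l : ℕ) : poch q (l + 1) = poch q l * (q + l) := by
  simp [poch, Finset.prod_range_succ]

lemma poch_succ' (q : ℝ) (l : ℕ) : poch q (l + 1) = q * poch (q + 1) l := by
  induction l with
  | zero => simp [poch_succ, poch_zero]
  | succ l ih => rw [poch_succ, ih, poch_succ]; push_cast; ring

lemma poch_pos {q : ℝ} (hq : 0 < q) (l : ℕ) : 0 < poch q l :=
  Finset.prod_pos fun i _ => by positivity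

lemma poch_neg_eq_zero {n l : ℕ} (h : n < l) : poch (-(n : ℝ)) l = 0 :=
  Finset.prod_eq_zero (Finset.mem_range.2 h) (by simp)

noncomputable def tA (x β z : ℝ) (l : ℕ) : ℝ :=
  poch (-x) l / (poch β l * (l.factorial : ℝ)) * z ^ l

lemma tA_succ (x β z : ℝ) (hβ : 0 < β) (l : ℕ) :
    (β + l) * (l + 1) * tA x β z (l + 1) = (l - x) * z * tA x β z l := by
  unfold tA
  have h1 := (poch_pos hβ l).ne'
  have h2 : (l.factorial : ℝ) ≠ 0 := by positivity
  have h3 : β + l ≠ 0 := by positivity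
  have h4 : (l : ℝ) + 1 ≠ 0 := by positivity
  rw [poch_succ, poch_succ, Nat.factorial_succ]
  push_cast
  field_simp
  ring

lemma partial_rec (ν x β c z : ℝ) (hβ : 0 < β) (hz : c * z = c - 1) (N : ℕ) :
    ∑ l ∈ Finset.range (N + 1), (c * (ν + β) * poch (-(ν + 1)) l
      - (ν + (ν + β) * c + (c - 1) * x) * poch (-ν) l + ν * poch (-(ν - 1)) l) * tA x β z l
    = c * (β + N) * (N + 1) * poch (-ν) N * tA x β z (N + 1) := by
  induction N with
  | zero =>
    have h := tA_succ x β z hβ 0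
    simp only [Nat.cast_zero, zero_add, add_zero, Finset.sum_range_one, poch_zero] at h ⊢
    linear_combination (-c) * h + x * tA x β z 0 * hz
  | succ N ih =>
    rw [Finset.sum_range_succ, ih]
    have h := tA_succ x β z hβ (N + 1)
    have e1 : poch (-(ν + 1)) (N + 1) = -(ν + 1) * poch (-ν) N := by
      rw [poch_succ']; congr 2; ring
    have e2 : poch (-ν) (N + 1) = poch (-ν) N * (-ν + N) := poch_succ _ _
    have e3 : ν * poch (-(ν - 1)) (N + 1) = - (poch (-ν) N * (-ν + N) * (-ν + N + 1)) := by
      have a := poch_succ' (-ν) (N + 1)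
      rw [poch_succ, poch_succ] at a
      have : -ν + 1 = -(ν - 1) := by ring
      rw [this] at a
      push_cast at a
      linear_combination a
    rw [e3, e1, e2]
    push_cast at h ⊢
    linear_combination (-c * poch (-ν) N * (-ν + N)) * h
      - ((N + 1 - x) * tA x β z (N + 1) * poch (-ν) N * (-ν + N)) * hz

noncomputable def FF (ν : ℝ) (x : ℕ) (β z : ℝ) : ℝ :=
  ∑ l ∈ Finset.range (x + 1), poch (-ν) l * tA x β z l

lemma FF_rec (ν : ℝ) (x : ℕ) (β c z : ℝ) (hβ : 0 < β) (hz : c * z = c - 1) :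
    c * (ν + β) * FF (ν + 1) x β z - (ν + (ν + β) * c + (c - 1) * x) * FF ν x β z
      + ν * FF (ν - 1) x β z = 0 := by
  have h := partial_rec ν x β c z hβ hz x
  have h0 : tA x β z (x + 1) = 0 := by
    simp [tA, poch_neg_eq_zero (Nat.lt_succ_self x)]
  rw [h0, mul_zero] at h
  rw [← h]
  unfold FF
  simp only [Finset.mul_sum, ← Finset.sum_sub_distrib, ← Finset.sum_add_distrib]
  exact Finset.sum_congr rfl fun l _ => by ring

lemma meixner_eq (n x : ℕ) (β c : ℝ) : meixner n x β c =
    (-1) ^ n * Real.sqrt (poch β n * c ^ n / n.factorial) * FF n x β (1 - 1 / c) := by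
  unfold meixner FF
  congr 1
  have : Finset.range (min n x + 1) ⊆ Finset.range (x + 1) := by
    intro a; simp only [Finset.mem_range]; omega
  rw [← Finset.sum_subset this]
  · exact Finset.sum_congr rfl fun l _ => by unfold tA; ring
  · intro l h1 h2
    simp only [Finset.mem_range] at h1 h2
    rw [poch_neg_eq_zero (by omega), zero_mul]

lemma weight_up (n : ℕ) (β c : ℝ) (hβ : 0 < β) (hc : 0 < c) :
    Real.sqrt (((n : ℝ) + 1) * (n + β))
      * Real.sqrt (poch β (n + 1) * c ^ (n + 1) / (n + 1).factorial)
    = (n + β) * Real.sqrt c * Real.sqrt (poch β n * c ^ n / n.factorial) := by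
  have h2 : (n.factorial : ℝ) ≠ 0 := by positivity
  have h4 : (n : ℝ) + 1 ≠ 0 := by positivity
  have hp := poch_pos hβ n
  have hp1 := poch_pos hβ (n + 1)
  have h5 : (0:ℝ) ≤ n + β := by positivity
  nth_rewrite 2 [← Real.sqrt_sq h5]
  rw [← Real.sqrt_mul (by positivity), ← Real.sqrt_mul (by positivity),
    ← Real.sqrt_mul (by positivity)]
  congr 1
  rw [poch_succ, Nat.factorial_succ]
  push_cast
  field_simp
  ring

lemma weight_down (n : ℕ) (β c : ℝ) (hβ : 0 < β) (hc : 0 < c) :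
    Real.sqrt c * (Real.sqrt (((n : ℝ) + 1) * (n + β))
      * Real.sqrt (poch β n * c ^ n / n.factorial))
    = (n + 1) * Real.sqrt (poch β (n + 1) * c ^ (n + 1) / (n + 1).factorial) := by
  have h2 : (n.factorial : ℝ) ≠ 0 := by positivity
  have h4 : (n : ℝ) + 1 ≠ 0 := by positivity
  have hp := poch_pos hβ n
  have hp1 := poch_pos hβ (n + 1)
  have h5 : (0:ℝ) ≤ n + 1 := by positivity
  nth_rewrite 2 [← Real.sqrt_sq h5]
  rw [← Real.sqrt_mul (by positivity), ← Real.sqrt_mul (by positivity),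
    ← Real.sqrt_mul (by positivity)]
  congr 1
  rw [poch_succ, Nat.factorial_succ]
  push_cast
  field_simp
  ring

/-- Meixner polynomials as formal eigenvectors of the su(1,1)
Lax operator in the positive discrete series, hyperbolic case s² − r² > 0
(convention M_{−1} = 0; the coefficient of M_{n−1} vanishes at n = 0). -/
theorem stmt_5 (k r s c C : ℝ) (hk : 0 < k) (hr : 0 < r) (hrs : r < s)
    (hc0 : 0 < c) (hc1 : c < 1)
    (hceq : (1 + c) / (2 * Real.sqrt c) = s / r)
    (hC : C = Real.sqrt (s ^ 2 - r ^ 2)) :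
    ∀ x n : ℕ,
      r * Real.sqrt (((n : ℝ) + 1) * ((n : ℝ) + 2 * k)) * meixner (n + 1) x (2 * k) c
        + 2 * s * ((n : ℝ) + k) * meixner n x (2 * k) c
        + r * Real.sqrt ((n : ℝ) * ((n : ℝ) + 2 * k - 1)) * meixner (n - 1) x (2 * k) c
      = 2 * C * ((x : ℝ) + k) * meixner n x (2 * k) c := by
  intro x n
  have hβ : 0 < 2 * k := by linarith
  have hz : c * (1 - 1 / c) = c - 1 := by field_simp
  have hq : 0 < Real.sqrt c := Real.sqrt_pos.2 hc0
  have hqq : Real.sqrt c ^ 2 = c := Real.sq_sqrt hc0.le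
  have hs : 2 * Real.sqrt c * s = r * (1 + c) := by
    field_simp at hceq
    linarith
  have hCC : 2 * Real.sqrt c * C = r * (1 - c) := by
    have : C = r * (1 - c) / (2 * Real.sqrt c) := by
      rw [hC, ← Real.sqrt_sq (show 0 ≤ r * (1 - c) / (2 * Real.sqrt c) from
        div_nonneg (mul_nonneg hr.le (by linarith)) (by positivity))]
      congr 1
      have : s = r * (1 + c) / (2 * Real.sqrt c) := by
        field_simp; linarith
      rw [this, div_pow, div_pow, mul_pow 2, hqq]
      field_simp
      ring
    rw [this]; field_simp
  have hrec := FF_rec n x (2 * k) c _ hβ hz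
  have hup := weight_up n (2 * k) c hβ hc0
  have hdown : Real.sqrt c * (Real.sqrt ((n : ℝ) * ((n : ℝ) + 2 * k - 1)) *
      meixner (n - 1) x (2 * k) c) = - ((-1) ^ n * n *
        Real.sqrt (poch (2 * k) n * c ^ n / n.factorial) * FF (n - 1) x (2 * k) (1 - 1 / c)) := by
    rcases n with _ | m
    · simp
    · have h := weight_down m (2 * k) c hβ hc0
      rw [Nat.add_sub_cancel, meixner_eq]
      have e : ((m + 1 : ℕ) : ℝ) + 2 * k - 1 = m + 2 * k := by push_cast; ring
      have e' : ((m + 1 : ℕ) : ℝ) - 1 = m := by push_cast; ring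
      rw [e, e', pow_succ (-1 : ℝ)]
      push_cast at h ⊢
      linear_combination (-1) ^ m * FF m x (2 * k) (1 - 1 / c) * h
  apply mul_left_cancel₀ hq.ne'
  rw [meixner_eq (n + 1), meixner_eq n, pow_succ (-1 : ℝ)]
  push_cast at hup ⊢
  generalize FF ((n : ℝ) + 1) x (2 * k) (1 - 1 / c) = F1 at *
  generalize FF (n : ℝ) x (2 * k) (1 - 1 / c) = F0 at *
  generalize FF ((n : ℝ) - 1) x (2 * k) (1 - 1 / c) = F2 at *
  generalize Real.sqrt (poch (2 * k) n * c ^ n / n.factorial) = w at *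
  linear_combination r * hdown - r * Real.sqrt c * (-1) ^ n * F1 * hup
    - r * (-1) ^ n * (n + 2 * k) * w * F1 * hqq + (n + k) * (-1) ^ n * w * F0 * hs
    - (x + k) * (-1) ^ n * w * F0 * hCC - r * (-1) ^ n * w * hrec
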